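/- Fix integers N ≥ 1 and n ≥ 1 and a point x = (x₁,…,x_n) ∈ ℂⁿ; let S ⊆ ℂ be the set of values occurring among the x_j, and for y ∈ S let j₁(y) < ⋯ < j_{m_y}(y) be the indices j with x_j = y. Call a tuple (L₁,…,L_n) of ℂ[z]-submodules of ℂ(z)^N an admissible chain if, with L₀ = ℂ[z]^N, for every j ∈ {1,…,n} there exists k ∈ ℕ with (z−x_j)^k·L_{j−1} ⊆ L_j ⊆ (z−x_j)^{−k}·L_{j−1}. Call a tuple (Λ₁,…,Λ_m) an 𝒪-lattice chain of length m if each Λ_i is a ℂ[[t]]-submodule of ℂ((t))^N satisfying t^k·ℂ[[t]]^N ⊆ Λ_i ⊆ t^{−k}·ℂ[[t]]^N for some k ∈ ℕ. Then the map sending an admissible chain (L₁,…,L_n) to the family, indexed by y ∈ S, of 𝒪-lattice chains (L̂^y_{j₁(y)}, …, L̂^y_{j_{m_y}(y)}), is a bijection from the set of admissible chains onto the product over y ∈ S of the sets of 𝒪-lattice chains of length m_y. (This is the paper's bijection (BDConv_n)_x ≅ ∏_{y ∈ supp(x)} Gr_{m_y} in the case G^∨ = GL_N, expressed in terms of lattices.)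 -/

import Mathlib

set_option synthInstance.maxHeartbeats 1000000
set_option maxHeartbeats 1000000

open scoped Classical

/-- The standard lattice `ℂ[z]^N` inside `ℂ(z)^N`, as a `ℂ[z]`-submodule:
the span of the standard basis vectors. -/
noncomputable def stdPolyLattice (N : ℕ) : Submodule (Polynomial ℂ) (Fin N → RatFunc ℂ) :=
  Submodule.span (Polynomial ℂ) (Set.range fun i : Fin N => Pi.single i (1 : RatFunc ℂ))

/-- The standard lattice `ℂ[[t]]^N` inside `ℂ((t))^N`, as a `ℂ[[t]]`-submodule:
the span of the standard basis vectors. -/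
noncomputable def stdPowLattice (N : ℕ) : Submodule (PowerSeries ℂ) (Fin N → LaurentSeries ℂ) :=
  Submodule.span (PowerSeries ℂ) (Set.range fun i : Fin N => Pi.single i (1 : LaurentSeries ℂ))

/-- The predecessor `L_{j-1}` of the `j`-th member of a tuple `(L₁, …, L_n)`,
with the convention `L₀ = L0`. -/
def chainPrev {M : Type*} {n : ℕ} (L0 : M) (L : Fin n → M) (j : Fin n) : M :=
  if h : (j : ℕ) = 0 then L0
  else L ⟨(j : ℕ) - 1, lt_of_le_of_lt (Nat.sub_le _ _) j.isLt⟩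

/-- An admissible chain: a tuple `(L₁, …, L_n)` of `ℂ[z]`-submodules of `ℂ(z)^N` such that,
with `L₀ = ℂ[z]^N`, for each `j` one has
`(z−x_j)^k·L_{j−1} ⊆ L_j ⊆ (z−x_j)^{−k}·L_{j−1}` for some `k ∈ ℕ`. -/
def IsAdmissibleChain (N : ℕ) {n : ℕ} (x : Fin n → ℂ)
    (L : Fin n → Submodule (Polynomial ℂ) (Fin N → RatFunc ℂ)) : Prop :=
  ∀ j : Fin n, ∃ k : ℕ,
    (∀ v ∈ chainPrev (stdPolyLattice N) L j,
      (algebraMap (Polynomial ℂ) (RatFunc ℂ) (Polynomial.X - Polynomial.C (x j))) ^ k • v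
        ∈ L j) ∧
    (∀ w ∈ L j,
      (algebraMap (Polynomial ℂ) (RatFunc ℂ) (Polynomial.X - Polynomial.C (x j))) ^ k • w
        ∈ chainPrev (stdPolyLattice N) L j)

/-- An `𝒪`-lattice: a `ℂ[[t]]`-submodule `Λ` of `ℂ((t))^N` such that
`t^k·ℂ[[t]]^N ⊆ Λ ⊆ t^{−k}·ℂ[[t]]^N` for some `k ∈ ℕ`, where `t` is the Laurent series
`HahnSeries.single 1 1`. -/
def IsOLattice (N : ℕ) (Λ : Submodule (PowerSeries ℂ) (Fin N → LaurentSeries ℂ)) : Prop :=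
  ∃ k : ℕ,
    (∀ v ∈ stdPowLattice N,
      ((HahnSeries.single (1 : ℤ) (1 : ℂ) : LaurentSeries ℂ)) ^ k • v ∈ Λ) ∧
    (∀ w ∈ Λ,
      ((HahnSeries.single (1 : ℤ) (1 : ℂ) : LaurentSeries ℂ)) ^ k • w ∈ stdPowLattice N)

/-- The `𝒪`-lattice `L̂^y` generated by the coordinatewise image of a `ℂ[z]`-submodule
`L ⊆ ℂ(z)^N` under the Laurent-expansion embedding `εy : ℂ(z) → ℂ((t))` at `y`. -/
noncomputable def latticeHat (N : ℕ) (εy : RatFunc ℂ →ₐ[ℂ] LaurentSeries ℂ)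
    (L : Submodule (Polynomial ℂ) (Fin N → RatFunc ℂ)) :
    Submodule (PowerSeries ℂ) (Fin N → LaurentSeries ℂ) :=
  Submodule.span (PowerSeries ℂ)
    ((fun (v : Fin N → RatFunc ℂ) (i : Fin N) => εy (v i)) '' (L : Set (Fin N → RatFunc ℂ)))

namespace BDFib

/-- Coordinatewise expansion. -/
noncomputable def ev {N : ℕ} (e : RatFunc ℂ →ₐ[ℂ] LaurentSeries ℂ) (v : Fin N → RatFunc ℂ) :
    Fin N → LaurentSeries ℂ := fun i => e (v i)

/-- Expansion condition at `y`. -/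
def IsExp (e : RatFunc ℂ →ₐ[ℂ] LaurentSeries ℂ) (y : ℂ) : Prop :=
  e RatFunc.X = HahnSeries.single (0 : ℤ) y + HahnSeries.single (1 : ℤ) (1 : ℂ)

/-- Taylor expansion as a power series. -/
noncomputable def tay (y : ℂ) (p : Polynomial ℂ) : PowerSeries ℂ :=
  ((Polynomial.taylor y p : Polynomial ℂ) : PowerSeries ℂ)

lemma single_eq : (HahnSeries.single (1 : ℤ) (1 : ℂ) : LaurentSeries ℂ)
    = algebraMap (PowerSeries ℂ) (LaurentSeries ℂ) PowerSeries.X := by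
  rw [LaurentSeries.coe_algebraMap, HahnSeries.ofPowerSeries_X]

lemma tpow_smul {N : ℕ} (k : ℕ) (v : Fin N → LaurentSeries ℂ) :
    ((HahnSeries.single (1 : ℤ) (1 : ℂ) : LaurentSeries ℂ)) ^ k • v
      = (PowerSeries.X ^ k : PowerSeries ℂ) • v := by
  ext1 i
  simp only [single_eq, Pi.smul_apply, Algebra.smul_def, smul_eq_mul, map_pow]

lemma psmul_add {N : ℕ} (a : PowerSeries ℂ) (u v : Fin N → LaurentSeries ℂ) :
    a • (u + v) = a • u + a • v := by
  ext1 i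
  simp only [Pi.smul_apply, Pi.add_apply, Algebra.smul_def, mul_add]

lemma add_psmul {N : ℕ} (a b : PowerSeries ℂ) (v : Fin N → LaurentSeries ℂ) :
    (a + b) • v = a • v + b • v := by
  ext1 i
  simp only [Pi.smul_apply, Pi.add_apply, Algebra.smul_def, map_add, add_mul]

lemma psmul_zero {N : ℕ} (a : PowerSeries ℂ) :
    a • (0 : Fin N → LaurentSeries ℂ) = 0 := by
  ext1 i
  simp only [Pi.smul_apply, Pi.zero_apply, Algebra.smul_def, mul_zero]

lemma ppow_smul {N : ℕ} (p : Polynomial ℂ) (k : ℕ) (v : Fin N → RatFunc ℂ) :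
    (algebraMap (Polynomial ℂ) (RatFunc ℂ) p) ^ k • v = (p ^ k) • v := by
  rw [← map_pow, algebraMap_smul]

lemma e_poly {e : RatFunc ℂ →ₐ[ℂ] LaurentSeries ℂ} {y : ℂ} (he : IsExp e y) (p : Polynomial ℂ) :
    e (algebraMap _ _ p) = algebraMap (PowerSeries ℂ) (LaurentSeries ℂ) (tay y p) := by
  induction p using Polynomial.induction_on' with
  | add p q hp hq => simp only [map_add, hp, hq, tay, Polynomial.coe_add]
  | monomial k a =>
    have hX : algebraMap (PowerSeries ℂ) (LaurentSeries ℂ) (PowerSeries.X + PowerSeries.C y)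
        = e RatFunc.X := by
      rw [he, map_add, ← single_eq, LaurentSeries.coe_algebraMap, HahnSeries.ofPowerSeries_C,
        add_comm]; rfl
    have hC : algebraMap (PowerSeries ℂ) (LaurentSeries ℂ) (PowerSeries.C a)
        = e (algebraMap ℂ _ a) := by
      rw [e.commutes, LaurentSeries.coe_algebraMap, HahnSeries.algebraMap_apply']; rfl
    rw [← Polynomial.C_mul_X_pow_eq_monomial]
    simp only [tay, map_mul, map_pow, RatFunc.algebraMap_X, Polynomial.taylor_mul,
      Polynomial.taylor_C, Polynomial.taylor_pow, Polynomial.taylor_X, Polynomial.coe_mul,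
      Polynomial.coe_pow, Polynomial.coe_add, Polynomial.coe_X, Polynomial.coe_C, hX, hC]
    rfl

lemma tay_pi (y : ℂ) (k : ℕ) : tay y ((Polynomial.X - Polynomial.C y) ^ k) = PowerSeries.X ^ k := by
  simp [tay]

lemma tay_mul (y : ℂ) (p q : Polynomial ℂ) : tay y (p * q) = tay y p * tay y q := by
  simp [tay]

lemma tay_unit {y : ℂ} {p : Polynomial ℂ} (hp : p.eval y ≠ 0) : IsUnit (tay y p) := by
  rw [PowerSeries.isUnit_iff_constantCoeff]
  simpa [tay, Polynomial.taylor_coeff_zero] using hp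

section
variable {N : ℕ} {e : RatFunc ℂ →ₐ[ℂ] LaurentSeries ℂ} {y : ℂ}

lemma ev_add (v w : Fin N → RatFunc ℂ) : ev e (v + w) = ev e v + ev e w := by
  ext1 i; simp [ev]

lemma ev_zero : ev e (0 : Fin N → RatFunc ℂ) = 0 := by
  ext1 i; simp [ev]

lemma ev_sub (v w : Fin N → RatFunc ℂ) : ev e (v - w) = ev e v - ev e w := by
  ext1 i; simp [ev]

lemma ev_smul (he : IsExp e y) (p : Polynomial ℂ) (v : Fin N → RatFunc ℂ) :
    ev e (p • v) = tay y p • ev e v := by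
  ext1 i
  simp only [ev, Pi.smul_apply, Algebra.smul_def, map_mul, e_poly he]

lemma hat_def (L : Submodule (Polynomial ℂ) (Fin N → RatFunc ℂ)) :
    latticeHat N e L = Submodule.span (PowerSeries ℂ) (ev e '' (L : Set (Fin N → RatFunc ℂ))) := rfl

lemma ev_mem {L : Submodule (Polynomial ℂ) (Fin N → RatFunc ℂ)} {v} (hv : v ∈ L) :
    ev e v ∈ latticeHat N e L := by
  rw [hat_def]; exact Submodule.subset_span ⟨v, hv, rfl⟩

lemma X_cancel (k : ℕ) {u v : Fin N → LaurentSeries ℂ}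
    (h : (PowerSeries.X ^ k : PowerSeries ℂ) • u = (PowerSeries.X ^ k : PowerSeries ℂ) • v) :
    u = v := by
  rw [← tpow_smul, ← tpow_smul] at h
  have h0 : ((HahnSeries.single (1 : ℤ) (1 : ℂ) : LaurentSeries ℂ)) ^ k ≠ 0 :=
    pow_ne_zero _ (by simp)
  ext1 i
  have hi := congrFun h i
  simp only [Pi.smul_apply, smul_eq_mul] at hi
  exact mul_left_cancel₀ h0 hi

/-- density -/
lemma density (he : IsExp e y) (L : Submodule (Polynomial ℂ) (Fin N → RatFunc ℂ)) (m : ℕ)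
    {l : Fin N → LaurentSeries ℂ} (hl : l ∈ latticeHat N e L) :
    ∃ v ∈ L, ∃ l' ∈ latticeHat N e L, l = ev e v + (PowerSeries.X ^ m : PowerSeries ℂ) • l' := by
  rw [hat_def] at hl
  induction hl using Submodule.span_induction with
  | mem x hx =>
    obtain ⟨v, hv, rfl⟩ := hx
    exact ⟨v, hv, 0, zero_mem _, by rw [psmul_zero, add_zero]⟩
  | zero => exact ⟨0, zero_mem _, 0, zero_mem _, by rw [psmul_zero, ev_zero, add_zero]⟩
  | add a b _ _ iha ihb =>
    obtain ⟨v, hv, l, hl, rfl⟩ := iha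
    obtain ⟨w, hw, l', hl', rfl⟩ := ihb
    exact ⟨v + w, add_mem hv hw, l + l', add_mem hl hl', by rw [ev_add, psmul_add]; abel⟩
  | smul a b _ ih =>
    obtain ⟨v, hv, l, hl, rfl⟩ := ih
    obtain ⟨b, hb⟩ : ∃ b, a = ((PowerSeries.trunc m a : Polynomial ℂ) : PowerSeries ℂ)
        + PowerSeries.X ^ m * b := by
      have : (PowerSeries.X ^ m : PowerSeries ℂ) ∣
          a - ((PowerSeries.trunc m a : Polynomial ℂ) : PowerSeries ℂ) := by
        rw [PowerSeries.X_pow_dvd_iff]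
        intro i hi
        simp [PowerSeries.coeff_trunc, hi]
      obtain ⟨b, hb⟩ := this
      exact ⟨b, by rw [← hb]; ring⟩
    set p := PowerSeries.trunc m a
    have hp : tay y (Polynomial.taylor (-y) p) = (p : PowerSeries ℂ) := by
      simp [tay, Polynomial.taylor_taylor]
    refine ⟨(Polynomial.taylor (-y) p) • v, L.smul_mem _ hv, b • ev e v + a • l,
      add_mem (Submodule.smul_mem _ _ (ev_mem hv)) (Submodule.smul_mem _ _ hl), ?_⟩
    rw [ev_smul he, hp, psmul_add, psmul_add, smul_smul, smul_smul, smul_smul, ← add_assoc,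
      ← add_psmul, ← hb, mul_comm a]

lemma mem_std {v : Fin N → RatFunc ℂ} : v ∈ stdPolyLattice N ↔
    ∀ i, ∃ p : Polynomial ℂ, algebraMap _ _ p = v i := by
  constructor
  · intro h
    unfold stdPolyLattice at h
    induction h using Submodule.span_induction with
    | mem x hx =>
      obtain ⟨j, rfl⟩ := hx
      intro i
      by_cases hij : i = j
      · subst hij; exact ⟨1, by simp⟩
      · exact ⟨0, by simp [hij]⟩
    | zero => exact fun i => ⟨0, by simp⟩
    | add a b _ _ iha ihb =>
      intro i
      obtain ⟨p, hp⟩ := iha i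
      obtain ⟨q, hq⟩ := ihb i
      exact ⟨p + q, by simp [hp, hq]⟩
    | smul a b _ ih =>
      intro i
      obtain ⟨p, hp⟩ := ih i
      exact ⟨a * p, by simp [hp, Algebra.smul_def]⟩
  · intro h
    choose p hp using h
    have : v = ∑ i, p i • (Pi.single i (1 : RatFunc ℂ) : Fin N → RatFunc ℂ) := by
      ext1 j
      simp [Finset.sum_apply, Pi.single_apply, Algebra.smul_def, hp]
    rw [this]
    exact Submodule.sum_mem _ fun i _ => Submodule.smul_mem _ _ (Submodule.subset_span ⟨i, rfl⟩)

lemma mem_pstd {v : Fin N → LaurentSeries ℂ} : v ∈ stdPowLattice N ↔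
    ∀ i, ∃ p : PowerSeries ℂ, algebraMap _ _ p = v i := by
  constructor
  · intro h
    unfold stdPowLattice at h
    induction h using Submodule.span_induction with
    | mem x hx =>
      obtain ⟨j, rfl⟩ := hx
      intro i
      by_cases hij : i = j
      · subst hij; exact ⟨1, by simp⟩
      · exact ⟨0, by simp [hij]⟩
    | zero => exact fun i => ⟨0, by simp⟩
    | add a b _ _ iha ihb =>
      intro i
      obtain ⟨p, hp⟩ := iha i
      obtain ⟨q, hq⟩ := ihb i
      exact ⟨p + q, by rw [map_add, hp, hq]; rfl⟩
    | smul a b _ ih =>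
      intro i
      obtain ⟨p, hp⟩ := ih i
      exact ⟨a * p, by rw [map_mul, hp, Pi.smul_apply, Algebra.smul_def]⟩
  · intro h
    choose p hp using h
    have : v = ∑ i, p i • (Pi.single i (1 : LaurentSeries ℂ) : Fin N → LaurentSeries ℂ) := by
      ext1 j
      rw [Finset.sum_apply, Finset.sum_eq_single j]
      · rw [Pi.smul_apply, Algebra.smul_def, hp, Pi.single_eq_same, mul_one]
      · intro b _ hb
        rw [Pi.smul_apply, Pi.single_eq_of_ne hb.symm, Algebra.smul_def, mul_zero]
      · simp
    rw [this]
    exact Submodule.sum_mem _ fun i _ => Submodule.smul_mem _ _ (Submodule.subset_span ⟨i, rfl⟩)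

lemma ev_std (he : IsExp e y) {v : Fin N → RatFunc ℂ} (hv : v ∈ stdPolyLattice N) :
    ev e v ∈ stdPowLattice N := by
  rw [mem_std] at hv
  rw [mem_pstd]
  intro i
  obtain ⟨p, hp⟩ := hv i
  exact ⟨tay y p, by rw [ev, ← hp, e_poly he]⟩

lemma regular (he : IsExp e y) (r : RatFunc ℂ) (s : PowerSeries ℂ)
    (h : algebraMap (PowerSeries ℂ) (LaurentSeries ℂ) s = e r) :
    r.denom.eval y ≠ 0 := by
  intro h0
  have h1 : algebraMap (Polynomial ℂ) (RatFunc ℂ) r.num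
      = algebraMap (Polynomial ℂ) (RatFunc ℂ) r.denom * r := by
    have hd : algebraMap (Polynomial ℂ) (RatFunc ℂ) r.denom ≠ 0 := by
      simpa using r.denom_ne_zero
    conv_rhs => rw [← RatFunc.num_div_denom r, RatFunc.num_div_denom r]
    conv_rhs => arg 2; rw [← RatFunc.num_div_denom r]
    field_simp
  have h2 := congrArg e h1
  rw [map_mul, e_poly he, e_poly he, ← h, ← map_mul] at h2
  have h3 : tay y r.num = tay y r.denom * s := by
    rw [LaurentSeries.coe_algebraMap] at h2
    exact HahnSeries.ofPowerSeries_injective h2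
  have h4 : r.num.eval y = 0 := by
    have := congrArg PowerSeries.constantCoeff h3
    simpa [tay, Polynomial.taylor_coeff_zero, h0] using this
  obtain ⟨a, b, hab⟩ := RatFunc.isCoprime_num_denom r
  have := congrArg (Polynomial.eval y) hab
  simp [h0, h4] at this

lemma regular_vec (he : IsExp e y) (u : Fin N → RatFunc ℂ) (h : ev e u ∈ stdPowLattice N) :
    ∃ q : Polynomial ℂ, q.eval y ≠ 0 ∧ q • u ∈ stdPolyLattice N := by
  rw [mem_pstd] at h
  refine ⟨∏ i, (u i).denom, ?_, ?_⟩
  · rw [Polynomial.eval_prod]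
    refine Finset.prod_ne_zero_iff.2 fun i _ => ?_
    obtain ⟨s, hs⟩ := h i
    exact regular he _ s hs
  · rw [mem_std]
    intro i
    refine ⟨(∏ j ∈ Finset.univ.erase i, (u j).denom) * (u i).num, ?_⟩
    rw [← Finset.prod_erase_mul _ _ (Finset.mem_univ i), Pi.smul_apply, Algebra.smul_def, map_mul,
      map_mul, mul_assoc]
    congr 1
    have hd : algebraMap (Polynomial ℂ) (RatFunc ℂ) (u i).denom ≠ 0 := by
      simpa using (u i).denom_ne_zero
    conv_rhs => arg 2; rw [← RatFunc.num_div_denom (u i)]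
    field_simp

/-- Commensurable with the standard lattice. -/
def Comm (L : Submodule (Polynomial ℂ) (Fin N → RatFunc ℂ)) : Prop :=
  ∃ f : Polynomial ℂ, f ≠ 0 ∧ (∀ v ∈ stdPolyLattice N, f • v ∈ L) ∧
    (∀ v ∈ L, f • v ∈ stdPolyLattice N)

/-- step relation -/
def Step (y : ℂ) (L L' : Submodule (Polynomial ℂ) (Fin N → RatFunc ℂ)) : Prop :=
  ∃ k : ℕ, (∀ v ∈ L, (Polynomial.X - Polynomial.C y) ^ k • v ∈ L') ∧
    (∀ v ∈ L', (Polynomial.X - Polynomial.C y) ^ k • v ∈ L)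

lemma comm_std : Comm (stdPolyLattice N) :=
  ⟨1, one_ne_zero, by simp, by simp⟩

lemma Comm.step {L L' : Submodule (Polynomial ℂ) (Fin N → RatFunc ℂ)} (h : Comm L)
    (hs : Step y L L') : Comm L' := by
  obtain ⟨f, hf, h1, h2⟩ := h
  obtain ⟨k, h3, h4⟩ := hs
  refine ⟨f * (Polynomial.X - Polynomial.C y) ^ k,
    mul_ne_zero hf (pow_ne_zero _ (Polynomial.X_sub_C_ne_zero y)), fun v hv => ?_, fun v hv => ?_⟩
  · rw [mul_comm, mul_smul]; exact h3 _ (h1 _ hv)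
  · rw [mul_smul]; exact h2 _ (h4 _ hv)

lemma factor {f : Polynomial ℂ} (hf : f ≠ 0) (y : ℂ) : ∃ (b : ℕ) (g : Polynomial ℂ),
    g.eval y ≠ 0 ∧ f = (Polynomial.X - Polynomial.C y) ^ b * g := by
  obtain ⟨g, hg, hg'⟩ := Polynomial.exists_eq_pow_rootMultiplicity_mul_and_not_dvd f hf y
  exact ⟨_, g, fun h => hg' (Polynomial.dvd_iff_isRoot.2 h), hg⟩

lemma isOLattice_iff {Λ : Submodule (PowerSeries ℂ) (Fin N → LaurentSeries ℂ)} :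
    IsOLattice N Λ ↔ ∃ k : ℕ, (∀ v ∈ stdPowLattice N, (PowerSeries.X ^ k : PowerSeries ℂ) • v ∈ Λ) ∧
      (∀ v ∈ Λ, (PowerSeries.X ^ k : PowerSeries ℂ) • v ∈ stdPowLattice N) := by
  simp only [IsOLattice, tpow_smul]

lemma Comm.hat {L : Submodule (Polynomial ℂ) (Fin N → RatFunc ℂ)} (h : Comm L)
    (he : IsExp e y) : IsOLattice N (latticeHat N e L) := by
  obtain ⟨f, hf, h1, h2⟩ := h
  obtain ⟨b, g, hg, rfl⟩ := factor hf y
  have hu := tay_unit hg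
  rw [isOLattice_iff]
  refine ⟨b, fun v hv => ?_, fun v hv => ?_⟩
  · unfold stdPowLattice at hv
    induction hv using Submodule.span_induction with
    | mem x hx =>
      obtain ⟨j, rfl⟩ := hx
      have h3 : (Pi.single j 1 : Fin N → RatFunc ℂ) ∈ stdPolyLattice N :=
        Submodule.subset_span ⟨j, rfl⟩
      have h4 := ev_mem (e := e) (h1 _ h3)
      rw [ev_smul he, tay_mul, tay_pi, mul_comm, mul_smul] at h4
      have h5 : ev e (Pi.single j 1 : Fin N → RatFunc ℂ) = Pi.single j 1 := by
        ext1 i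
        by_cases hij : i = j
        · subst hij; simp [ev]
        · simp [ev, hij]
      rw [h5] at h4
      exact (Submodule.smul_mem_iff_of_isUnit _ hu).1 h4
    | zero => rw [psmul_zero]; exact zero_mem _
    | add u v _ _ hu hv => rw [psmul_add]; exact add_mem hu hv
    | smul a v _ hv => rw [smul_comm]; exact Submodule.smul_mem _ _ hv
  · rw [hat_def] at hv
    induction hv using Submodule.span_induction with
    | mem x hx =>
      obtain ⟨v, hv, rfl⟩ := hx
      have h4 := ev_std he (h2 _ hv)
      rw [ev_smul he, tay_mul, tay_pi, mul_comm, mul_smul] at h4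
      exact (Submodule.smul_mem_iff_of_isUnit _ hu).1 h4
    | zero => rw [psmul_zero]; exact zero_mem _
    | add u v _ _ hu hv => rw [psmul_add]; exact add_mem hu hv
    | smul a v _ hv => rw [smul_comm]; exact Submodule.smul_mem _ _ hv

lemma divide (y : ℂ) (k : ℕ) (v : Fin N → RatFunc ℂ) :
    ∃ u : Fin N → RatFunc ℂ, (Polynomial.X - Polynomial.C y) ^ k • u = v := by
  have h : (algebraMap (Polynomial ℂ) (RatFunc ℂ) (Polynomial.X - Polynomial.C y)) ^ k ≠ 0 := by
    refine pow_ne_zero _ ?_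
    exact RatFunc.algebraMap_ne_zero (Polynomial.X_sub_C_ne_zero y)
  refine ⟨((algebraMap (Polynomial ℂ) (RatFunc ℂ) (Polynomial.X - Polynomial.C y)) ^ k)⁻¹ • v, ?_⟩
  rw [← ppow_smul, smul_inv_smul₀ h]

/-- membership criterion -/
lemma Comm.mem {L : Submodule (Polynomial ℂ) (Fin N → RatFunc ℂ)} (h : Comm L)
    (he : IsExp e y) {v : Fin N → RatFunc ℂ} {k : ℕ}
    (hk : (Polynomial.X - Polynomial.C y) ^ k • v ∈ L) (hv : ev e v ∈ latticeHat N e L) :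
    v ∈ L := by
  obtain ⟨a, -, ha⟩ := isOLattice_iff.1 (h.hat he)
  obtain ⟨f, hf, h1, h2⟩ := h
  obtain ⟨b, g, hg, rfl⟩ := factor hf y
  obtain ⟨l, hl, l', hl', hvl⟩ := density he L (b + a) hv
  obtain ⟨u, hu⟩ := divide y b (v - l)
  have h3 : ev e u ∈ stdPowLattice N := by
    have : ev e u = (PowerSeries.X ^ a : PowerSeries ℂ) • l' := by
      apply X_cancel b
      rw [← tay_pi y b, ← ev_smul he, hu, ev_sub, hvl, tay_pi, smul_smul, pow_add]
      abel
    rw [this]; exact ha _ hl'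
  obtain ⟨q, hq, hqu⟩ := regular_vec he u h3
  have h4 := h1 _ hqu
  have h5 : (g * q) • (v - l) ∈ L := by
    rw [← hu]
    convert h4 using 1
    simp only [smul_smul]; congr 1; ring
  have h6 : (g * q) • v ∈ L := by
    have := add_mem h5 (L.smul_mem (g * q) hl)
    rwa [smul_sub, sub_add_cancel] at this
  have hc : IsCoprime ((Polynomial.X - Polynomial.C y) ^ k) (g * q) := by
    apply IsCoprime.pow_left
    rw [Irreducible.coprime_iff_not_dvd (Polynomial.irreducible_X_sub_C y),
      Polynomial.dvd_iff_isRoot, Polynomial.IsRoot, Polynomial.eval_mul]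
    exact mul_ne_zero hg hq
  obtain ⟨c, d, hcd⟩ := hc
  have := add_mem (L.smul_mem c hk) (L.smul_mem d h6)
  rwa [smul_smul, smul_smul, ← add_smul, hcd, one_smul] at this

lemma unique_le {L L' L'' : Submodule (Polynomial ℂ) (Fin N → RatFunc ℂ)} (h : Comm L)
    (he : IsExp e y) (h' : Step y L L') (h'' : Step y L L'')
    (hh : latticeHat N e L' = latticeHat N e L'') : L' ≤ L'' := by
  intro v hv
  have hc := h.step h''
  obtain ⟨k', -, hk'⟩ := h'
  obtain ⟨k'', hk'', -⟩ := h''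
  refine hc.mem he (k := k'' + k') ?_ (hh ▸ ev_mem hv)
  rw [pow_add, mul_smul]
  exact hk'' _ (hk' _ hv)

/-- the modified lattice -/
noncomputable def modif (e : RatFunc ℂ →ₐ[ℂ] LaurentSeries ℂ) (y : ℂ) (he : IsExp e y)
    (L : Submodule (Polynomial ℂ) (Fin N → RatFunc ℂ))
    (M : Submodule (PowerSeries ℂ) (Fin N → LaurentSeries ℂ)) :
    Submodule (Polynomial ℂ) (Fin N → RatFunc ℂ) where
  carrier := {v | (∃ k : ℕ, (Polynomial.X - Polynomial.C y) ^ k • v ∈ L) ∧ ev e v ∈ M}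
  zero_mem' := ⟨⟨0, by simp⟩, by rw [ev_zero]; exact zero_mem _⟩
  add_mem' := by
    rintro v w ⟨⟨k, hk⟩, hv⟩ ⟨⟨m, hm⟩, hw⟩
    refine ⟨⟨k + m, ?_⟩, by rw [ev_add]; exact add_mem hv hw⟩
    rw [smul_add]
    refine add_mem ?_ ?_
    · rw [add_comm, pow_add, mul_smul]; exact L.smul_mem _ hk
    · rw [pow_add, mul_smul]; exact L.smul_mem _ hm
  smul_mem' := by
    rintro p v ⟨⟨k, hk⟩, hv⟩
    refine ⟨⟨k, ?_⟩, by rw [ev_smul he]; exact M.smul_mem _ hv⟩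
    rw [smul_comm]; exact L.smul_mem _ hk

lemma modif_spec (he : IsExp e y) {L : Submodule (Polynomial ℂ) (Fin N → RatFunc ℂ)} (h : Comm L)
    {M : Submodule (PowerSeries ℂ) (Fin N → LaurentSeries ℂ)} (hM : IsOLattice N M) :
    Step y L (modif e y he L M) ∧ latticeHat N e (modif e y he L M) = M := by
  obtain ⟨a, ha1, ha2⟩ : ∃ a : ℕ,
      (∀ v ∈ latticeHat N e L, (PowerSeries.X ^ a : PowerSeries ℂ) • v ∈ M) ∧
      (∀ v ∈ M, (PowerSeries.X ^ a : PowerSeries ℂ) • v ∈ latticeHat N e L) := by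
    obtain ⟨k, h1, h2⟩ := isOLattice_iff.1 (h.hat he)
    obtain ⟨m, h3, h4⟩ := isOLattice_iff.1 hM
    refine ⟨k + m, fun v hv => ?_, fun v hv => ?_⟩
    · rw [add_comm, pow_add, mul_smul]; exact h3 _ (h2 _ hv)
    · rw [pow_add, mul_smul]; exact h1 _ (h4 _ hv)
  have hin : ∀ v ∈ L, (Polynomial.X - Polynomial.C y) ^ a • v ∈ modif e y he L M := by
    intro v hv
    refine ⟨⟨0, ?_⟩, ?_⟩
    · exact L.smul_mem _ (L.smul_mem _ hv)
    · rw [ev_smul he, tay_pi]; exact ha1 _ (ev_mem hv)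
  refine ⟨⟨a, hin, ?_⟩, le_antisymm ?_ ?_⟩
  · rintro v ⟨⟨k, hk⟩, hv⟩
    refine h.mem he (k := k) ?_ ?_
    · rw [smul_comm]; exact L.smul_mem _ hk
    · rw [ev_smul he, tay_pi]; exact ha2 _ hv
  · rw [hat_def, Submodule.span_le]
    rintro _ ⟨v, hv, rfl⟩
    exact hv.2
  · intro m hm
    obtain ⟨l, hl, l', hl', hml⟩ := density he L (a + a) (ha2 _ hm)
    obtain ⟨u, hu⟩ := divide y a l
    have h1 : m = ev e u + (PowerSeries.X ^ a : PowerSeries ℂ) • l' := by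
      apply X_cancel a
      rw [hml, ← hu, ev_smul he, tay_pi, psmul_add, smul_smul, pow_add]
    have h2 : u ∈ modif e y he L M := by
      refine ⟨⟨a, hu ▸ hl⟩, ?_⟩
      have : ev e u = m - (PowerSeries.X ^ a : PowerSeries ℂ) • l' := by rw [h1]; abel
      rw [this]
      exact sub_mem hm (ha1 _ hl')
    rw [h1]
    refine add_mem (ev_mem h2) ?_
    clear hml h1
    rw [hat_def] at hl'
    induction hl' using Submodule.span_induction with
    | mem x hx =>
      obtain ⟨v, hv, rfl⟩ := hx
      rw [← tay_pi y, ← ev_smul he]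
      exact ev_mem (hin _ hv)
    | zero => rw [psmul_zero]; exact zero_mem _
    | add u v _ _ hu hv => rw [psmul_add]; exact add_mem hu hv
    | smul a v _ hv => rw [smul_comm]; exact Submodule.smul_mem _ _ hv

end

lemma admissible_iff {N n : ℕ} {x : Fin n → ℂ}
    {L : Fin n → Submodule (Polynomial ℂ) (Fin N → RatFunc ℂ)} :
    IsAdmissibleChain N x L ↔ ∀ j, Step (x j) (chainPrev (stdPolyLattice N) L j) (L j) := by
  simp only [IsAdmissibleChain, Step, ppow_smul]

lemma prev_prop {M : Type*} {n : ℕ} {L0 : M} {L : Fin n → M} {j : Fin n} (P : M → Prop)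
    (h0 : P L0) (h : ∀ i : Fin n, (i : ℕ) < j → P (L i)) : P (chainPrev L0 L j) := by
  unfold chainPrev
  split_ifs with hj
  · exact h0
  · exact h _ (by simp only; omega)

lemma prev_eq {M : Type*} {n : ℕ} {L0 : M} {L L' : Fin n → M} {j : Fin n}
    (h : ∀ i : Fin n, (i : ℕ) < j → L i = L' i) : chainPrev L0 L j = chainPrev L0 L' j := by
  unfold chainPrev
  split_ifs with hj
  · rfl
  · exact h _ (by simp only; omega)

lemma chain_comm {N n : ℕ} {x : Fin n → ℂ}
    {L : Fin n → Submodule (Polynomial ℂ) (Fin N → RatFunc ℂ)} (h : IsAdmissibleChain N x L) :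
    ∀ (m : ℕ) (j : Fin n), (j : ℕ) = m → Comm (L j) := by
  rw [admissible_iff] at h
  intro m
  induction m using Nat.strong_induction_on with
  | _ m ih =>
    rintro j rfl
    exact (prev_prop Comm comm_std fun i hi => ih i hi i rfl).step (h j)

/-- recursive construction of the chain -/
noncomputable def build {N n : ℕ} (x : Fin n → ℂ) (ε : ℂ → (RatFunc ℂ →ₐ[ℂ] LaurentSeries ℂ))
    (hε : ∀ y, IsExp (ε y) y)
    (M : Fin n → Submodule (PowerSeries ℂ) (Fin N → LaurentSeries ℂ)) :
    ℕ → Submodule (Polynomial ℂ) (Fin N → RatFunc ℂ)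
  | 0 => stdPolyLattice N
  | k + 1 => if h : k < n then
      modif (ε (x ⟨k, h⟩)) (x ⟨k, h⟩) (hε _) (build x ε hε M k) (M ⟨k, h⟩)
    else build x ε hε M k

lemma build_comm {N n : ℕ} (x : Fin n → ℂ) (ε : ℂ → (RatFunc ℂ →ₐ[ℂ] LaurentSeries ℂ))
    (hε : ∀ y, IsExp (ε y) y)
    (M : Fin n → Submodule (PowerSeries ℂ) (Fin N → LaurentSeries ℂ)) (hM : ∀ j, IsOLattice N (M j))
    (k : ℕ) : Comm (build x ε hε M k) := by
  induction k with
  | zero => exact comm_std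
  | succ k ih =>
    rw [build]
    split_ifs with h
    · exact ih.step (modif_spec (hε _) ih (hM _)).1
    · exact ih

end BDFib

/-- The fiber of the Beilinson–Drinfeld convolution Grassmannian for `GL_N` over a point
`x = (x₁,…,x_n) ∈ ℂⁿ` (Proposition `pr:FibBDConv` of Baumann–Gaussent–Littelmann,
expressed in terms of lattices): given for each `y ∈ ℂ` the Laurent-expansion embedding
`ε y : ℂ(z) → ℂ((t))` at `z = y` (the `ℂ`-algebra map with `ε y (z) = y + t`), the map
sending an admissible chain `(L₁,…,L_n)` to the family, indexed by the values `y` of `x`,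
of the tuples of `𝒪`-lattices `(L̂^y_j)_{j : x_j = y}`, is a bijection from the set of
admissible chains onto the set of families of tuples of `𝒪`-lattices (the product over
`y ∈ supp x` of the sets of `𝒪`-lattice chains of length `m_y`). -/
theorem bd_fiber_bijection (N n : ℕ) (hN : 1 ≤ N) (hn : 1 ≤ n)
    (x : Fin n → ℂ)
    (ε : ℂ → (RatFunc ℂ →ₐ[ℂ] LaurentSeries ℂ))
    (hε : ∀ y : ℂ, ε y RatFunc.X =
      HahnSeries.single (0 : ℤ) y + HahnSeries.single (1 : ℤ) (1 : ℂ)) :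
    Set.BijOn
      (fun (L : Fin n → Submodule (Polynomial ℂ) (Fin N → RatFunc ℂ))
          (y : Set.range x) (j : {j : Fin n // x j = (y : ℂ)}) =>
        latticeHat N (ε (y : ℂ)) (L j.1))
      {L | IsAdmissibleChain N x L}
      {Λ : (y : Set.range x) → {j : Fin n // x j = (y : ℂ)} →
          Submodule (PowerSeries ℂ) (Fin N → LaurentSeries ℂ) |
        ∀ y j, IsOLattice N (Λ y j)} := by
  classical
  have hε' : ∀ y, BDFib.IsExp (ε y) y := hε
  refine ⟨?_, ?_, ?_⟩
  · intro L hL y j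
    exact (BDFib.chain_comm hL _ j.1 rfl).hat (hε' _)
  · intro L hL L' hL' hLL
    have hat_eq : ∀ j, latticeHat N (ε (x j)) (L j) = latticeHat N (ε (x j)) (L' j) := by
      intro j
      exact congrFun (congrFun hLL ⟨x j, j, rfl⟩) ⟨j, rfl⟩
    have key : ∀ (m : ℕ) (j : Fin n), (j : ℕ) = m → L j = L' j := by
      intro m
      induction m using Nat.strong_induction_on with
      | _ m ih =>
        rintro j rfl
        have h1 := BDFib.admissible_iff.1 hL j
        have h2 := BDFib.admissible_iff.1 hL' j
        rw [← BDFib.prev_eq fun i hi => ih i hi i rfl] at h2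
        have h3 : BDFib.Comm (chainPrev (stdPolyLattice N) L j) :=
          BDFib.prev_prop _ BDFib.comm_std fun i _ => BDFib.chain_comm hL _ i rfl
        exact le_antisymm (BDFib.unique_le h3 (hε' _) h1 h2 (hat_eq j))
          (BDFib.unique_le h3 (hε' _) h2 h1 (hat_eq j).symm)
    funext j
    exact key _ j rfl
  · intro Λ hΛ
    let M : Fin n → Submodule (PowerSeries ℂ) (Fin N → LaurentSeries ℂ) :=
      fun j => Λ ⟨x j, j, rfl⟩ ⟨j, rfl⟩
    have hM : ∀ j, IsOLattice N (M j) := fun j => hΛ _ _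
    have hB := BDFib.build_comm x ε hε' M hM
    have hsucc : ∀ j : Fin n, BDFib.build x ε hε' M (j + 1) =
        BDFib.modif (ε (x j)) (x j) (hε' _) (BDFib.build x ε hε' M j) (M j) := by
      intro j
      rw [BDFib.build, dif_pos j.2]
    refine ⟨fun j => BDFib.build x ε hε' M (j + 1), ?_, ?_⟩
    · refine BDFib.admissible_iff.2 fun j => ?_
      have hp : chainPrev (stdPolyLattice N) (fun j : Fin n => BDFib.build x ε hε' M (j + 1)) j
          = BDFib.build x ε hε' M j := by
        unfold chainPrev
        split_ifs with hj
        · rw [hj, BDFib.build]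
        · simp only
          rw [Nat.sub_add_cancel (by omega)]
      rw [hp, hsucc]
      exact (BDFib.modif_spec (hε' _) (hB j) (hM j)).1
    · funext y j
      obtain ⟨y, hy⟩ := y
      obtain ⟨j, hj⟩ := j
      simp only at hj
      subst hj
      simp only
      rw [hsucc]
      exact (BDFib.modif_spec (hε' _) (hB j) (hM j)).2
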